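/- Let d ≥ 2, D ≥ 3 and e be integers with 1 ≤ e < D and e ∣ D, and let A ⊆ ℕ^d be of one-singular-point type for D and e. Then the set {s ∈ ℕ : H ⊆ Δ_{s,e}, and s′A = Δ_{s′,e} \ H for every s′ ≥ s, and Δ_{s,e} + {0, Dε₁, …, Dε_d} = Δ_{s+1,e}} is nonempty, and its least element σ(A) satisfies σ(A)·D + (e−1) ≥ d·(D−1) and σ(A) ≤ (D/e)·((d−1)(D−2) + D/e − 2). -/

import Mathlib

open Pointwise

/-- The `s`-fold sumset of `A`: `0A = {0}` and `(s+1)A = A + sA`. -/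
def sumset {M : Type*} [AddMonoid M] (A : Set M) : ℕ → Set M
  | 0 => {0}
  | s + 1 => A + sumset A s

/-- `ℕ_e^d = {y ∈ ℕ^d : e ∣ |y|}`. -/
def NatE (d e : ℕ) : Set (Fin d → ℕ) := {y | e ∣ ∑ j, y j}

/-- `Δ_{s,e} = {y ∈ ℕ_e^d : |y| ≤ sD}`. -/
def DeltaE (d D e s : ℕ) : Set (Fin d → ℕ) := {y | e ∣ ∑ j, y j ∧ ∑ j, y j ≤ s * D}

/-- The hole set `H = ℕ_e^d \ ⟨A⟩`, where `⟨A⟩` is the additive submonoid generated by `A`. -/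
def Holes (d e : ℕ) (A : Set (Fin d → ℕ)) : Set (Fin d → ℕ) :=
  NatE d e \ (AddSubmonoid.closure A : Set (Fin d → ℕ))

/-- The set `{0, Dε₁, …, Dε_d}`. -/
def Erays (d D : ℕ) : Set (Fin d → ℕ) :=
  insert 0 (Set.range fun i : Fin d => Pi.single i D)

/-- `A ⊆ ℕ^d` is of one-singular-point type for `D` and `e`: every `a ∈ A` satisfies
`|a| ≤ D` and `e ∣ |a|`, and `A` contains `0`, the vectors `(D-1)εᵢ + εⱼ` for all `i, j`,
and the vectors `(D-e)εᵢ` for all `i`. -/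
def OneSingType (d D e : ℕ) (A : Set (Fin d → ℕ)) : Prop :=
  (∀ a ∈ A, ∑ j, a j ≤ D ∧ e ∣ ∑ j, a j) ∧
  (0 : Fin d → ℕ) ∈ A ∧
  (∀ i j : Fin d, Pi.single i (D - 1) + Pi.single j 1 ∈ A) ∧
  (∀ i : Fin d, Pi.single i (D - e) ∈ A)

/-!
Write `m = D / e`. A point with `|y| + c * e = t * D` and `c < m` should be a sum of `t` elements
of `A`: use `c` of the vectors `(D - e)εᵢ` and `t - c` of the vectors `(D - 1)εᵢ + εⱼ`. If every
`y i` is divided by `q`, the remainders are at most `q - 1`, so `n` vectors `qεᵢ` fit below `y` as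
soon as `n * q + (d - 1) * (q - 1) ≤ |y|`. For `q = D - e` and then `q = D - 1` this is guaranteed
by `(d - 1) * (D - 2) + c ≤ t`, which holds once `|y| > K * D`, where
`K = (d - 1) * (D - 2) + m - 2`. The points of `⟨A⟩` with `|y| ≤ K * D = e * (m * K)` are sums of at
most `m * K` elements of `A`, because a nonzero element has degree at least `e`. Finally, the
condition `Δ_{s,e} + {0, Dε₁, …, Dε_d} = Δ_{s+1,e}` fails exactly when some point of degree
`s * D + e` has all its coordinates below `D`, and this gives the lower bound.
-/

theorem sumset_eq_nsmul {M : Type*} [AddMonoid M] (A : Set M) (s : ℕ) : sumset A s = s • A := by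
  induction s with
  | zero => rw [sumset, zero_nsmul, Set.singleton_zero]
  | succ s ih => rw [sumset, ih, succ_nsmul']

theorem exists_mem_nsmul_of_mem_closure {M : Type*} [AddMonoid M] {A : Set M} (f : M →+ ℕ) {e : ℕ}
    (hA : ∀ a ∈ A, a ≠ 0 → e ≤ f a) {y : M} (hy : y ∈ AddSubmonoid.closure A) :
    ∃ n, e * n ≤ f y ∧ y ∈ n • A := by
  induction hy using AddSubmonoid.closure_induction with
  | mem a ha =>
    by_cases ha0 : a = 0
    · exact ⟨0, by simp, by simp [ha0]⟩
    · exact ⟨1, by simpa using hA a ha ha0, by simpa using ha⟩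
  | zero => exact ⟨0, by simp, by simp⟩
  | add x y _ _ hx hy =>
    obtain ⟨m, hm, hxm⟩ := hx
    obtain ⟨n, hn, hyn⟩ := hy
    refine ⟨m + n, ?_, ?_⟩
    · rw [mul_add, map_add]
      exact add_le_add hm hn
    · rw [add_nsmul]
      exact Set.add_mem_add hxm hyn

section Packing

variable {ι : Type*} [Fintype ι]

theorem exists_le_sum_eq {f : ι → ℕ} {n : ℕ} (hn : n ≤ ∑ i, f i) : ∃ g ≤ f, ∑ i, g i = n := by
  classical
  induction n with
  | zero => exact ⟨0, zero_le, by simp⟩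
  | succ n ih =>
    obtain ⟨g, hgf, hg⟩ := ih (by lia)
    obtain ⟨i, -, hi⟩ := Finset.exists_lt_of_sum_lt (hg.trans_lt hn)
    refine ⟨g + Pi.single i 1, fun j => ?_, by simp [Finset.sum_add_distrib, hg]⟩
    rcases eq_or_ne j i with rfl | hj
    · simpa using hi
    · simpa [hj] using hgf j

theorem exists_smul_le_of_le_sum {q n : ℕ} (hq : 0 < q) {y : ι → ℕ}
    (h : n * q + (Fintype.card ι - 1) * (q - 1) ≤ ∑ i, y i) :
    ∃ c : ι → ℕ, ∑ i, c i = n ∧ q • c ≤ y := by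
  have sum_le : ∑ i, y i ≤ q * ∑ i, (y i / q) + Fintype.card ι * (q - 1) := by
    calc ∑ i, y i ≤ ∑ i, (q * (y i / q) + (q - 1)) := Finset.sum_le_sum fun i _ => by
          have := Nat.div_add_mod (y i) q
          have := Nat.mod_lt (y i) hq
          lia
      _ = q * ∑ i, (y i / q) + Fintype.card ι * (q - 1) := by
          simp [Finset.sum_add_distrib, Finset.mul_sum]
  have n_le : n ≤ ∑ i, (y i / q) := by
    by_contra! hlt
    have : q * ∑ i, (y i / q) + q ≤ n * q := by nlinarith
    have : Fintype.card ι * (q - 1) ≤ (Fintype.card ι - 1) * (q - 1) + (q - 1) := by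
      rw [← Nat.succ_mul]
      exact Nat.mul_le_mul_right _ (by lia)
    lia
  obtain ⟨c, hc, hcn⟩ := exists_le_sum_eq n_le
  exact ⟨c, hcn, fun i => (Nat.mul_le_mul_left q (hc i)).trans (Nat.mul_div_le (y i) q)⟩

variable [DecidableEq ι]

theorem smul_mem_nsmul_range_single (q : ℕ) (c : ι → ℕ) :
    q • c ∈ (∑ i, c i) • Set.range fun i : ι => (Pi.single i q : ι → ℕ) := by
  have decomposition : q • c = ∑ i, c i • (Pi.single i q : ι → ℕ) := by
    simp_rw [← Pi.single_smul]
    rw [Finset.univ_sum_single fun i => c i • q]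
    exact funext fun i => mul_comm _ _
  rw [decomposition, ← Finset.sum_nsmul_assoc]
  exact Set.finsetSum_mem_finsetSum _ _ _ fun i _ => Set.nsmul_mem_nsmul (Set.mem_range_self i)

theorem mem_nsmul_of_sum_eq_mul {A : Set (ι → ℕ)} {q n : ℕ} (hq : 0 < q)
    (hA : ∀ i j, (Pi.single i q + Pi.single j 1 : ι → ℕ) ∈ A) {y : ι → ℕ}
    (hy : ∑ i, y i = n * (q + 1)) (hn : (Fintype.card ι - 1) * (q - 1) ≤ n) : y ∈ n • A := by
  obtain ⟨c, rfl, hcy⟩ := exists_smul_le_of_le_sum (n := n) hq (by rw [hy]; linarith)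
  obtain ⟨w, rfl⟩ := exists_add_of_le hcy
  have sum_w : ∑ i, w i = ∑ i, c i := by
    simp only [Pi.add_apply, Pi.smul_apply, smul_eq_mul, Finset.sum_add_distrib,
      ← Finset.mul_sum] at hy
    linarith
  have hw := smul_mem_nsmul_range_single 1 w
  rw [one_smul, sum_w] at hw
  have range_add_subset : (Set.range fun i : ι => (Pi.single i q : ι → ℕ)) +
      Set.range (fun j : ι => (Pi.single j 1 : ι → ℕ)) ⊆ A := by
    rintro _ ⟨_, ⟨i, rfl⟩, _, ⟨j, rfl⟩, rfl⟩
    exact hA i j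
  refine Set.nsmul_subset_nsmul_left range_add_subset ?_
  rw [nsmul_add]
  exact Set.add_mem_add (smul_mem_nsmul_range_single q c) hw

theorem mem_nsmul_of_sum_add_eq_mul {A : Set (ι → ℕ)} {D e c t : ℕ} (he : 0 < e) (heD : e < D)
    (hA₁ : ∀ i j, (Pi.single i (D - 1) + Pi.single j 1 : ι → ℕ) ∈ A)
    (hA₂ : ∀ i, (Pi.single i (D - e) : ι → ℕ) ∈ A) {y : ι → ℕ}
    (hy : ∑ i, y i + c * e = t * D) (ht : (Fintype.card ι - 1) * (D - 2) + c ≤ t) :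
    y ∈ t • A := by
  obtain ⟨n, rfl⟩ := exists_add_of_le (le_of_add_le_right ht)
  have hn : (Fintype.card ι - 1) * (D - 2) ≤ n := by lia
  have sum_y : ∑ i, y i = c * (D - e) + n * D := by
    zify [heD.le] at hy ⊢
    linarith
  have remainder_le : (Fintype.card ι - 1) * (D - e - 1) ≤ n * D :=
    calc (Fintype.card ι - 1) * (D - e - 1) ≤ (Fintype.card ι - 1) * (D - 2) :=
          Nat.mul_le_mul_left _ (by lia)
      _ ≤ n * D := hn.trans (Nat.le_mul_of_pos_right n (by lia))
  obtain ⟨k, rfl, hky⟩ := exists_smul_le_of_le_sum (n := c) (q := D - e) (by lia)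
    (sum_y ▸ Nat.add_le_add_left remainder_le _)
  obtain ⟨w, rfl⟩ := exists_add_of_le hky
  have sum_w : ∑ i, w i = n * (D - 1 + 1) := by
    simp only [Pi.add_apply, Pi.smul_apply, smul_eq_mul, Finset.sum_add_distrib,
      ← Finset.mul_sum] at sum_y
    rw [Nat.sub_add_cancel (by lia)]
    linarith
  rw [add_nsmul]
  exact Set.add_mem_add
    (Set.nsmul_subset_nsmul_left (Set.range_subset_iff.2 hA₂) (smul_mem_nsmul_range_single _ k))
    (mem_nsmul_of_sum_eq_mul (by lia) hA₁ sum_w hn)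

end Packing

theorem exists_add_mul_eq_mul_of_dvd {D e N : ℕ} (hD : 0 < D) (heD : e ∣ D) (heN : e ∣ N) :
    ∃ c t, c < D / e ∧ N + c * e = t * D := by
  obtain ⟨m, rfl⟩ := heD
  obtain ⟨u, rfl⟩ := heN
  have he : 0 < e := Nat.pos_of_mul_pos_right hD
  have hm : 0 < m := Nat.pos_of_mul_pos_left hD
  rw [Nat.mul_div_cancel_left m he]
  refine ⟨m - 1 - (u + (m - 1)) % m, (u + (m - 1)) / m, by lia, ?_⟩
  have hdiv := Nat.div_add_mod (u + (m - 1)) m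
  have hmod := Nat.mod_lt (u + (m - 1)) hm
  have : u + (m - 1 - (u + (m - 1)) % m) = m * ((u + (m - 1)) / m) := by lia
  linear_combination e * this

section DegreeTruncation

variable {d D e : ℕ}

theorem deltaE_add_deltaE_subset (m n : ℕ) :
    DeltaE d D e m + DeltaE d D e n ⊆ DeltaE d D e (m + n) := by
  rintro _ ⟨x, ⟨hx, hxm⟩, y, ⟨hy, hyn⟩, rfl⟩
  simp only [DeltaE, Set.mem_ofPred_eq, Pi.add_apply, Finset.sum_add_distrib, add_mul]
  exact ⟨dvd_add hx hy, add_le_add hxm hyn⟩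

theorem erays_subset_deltaE_one (hdvd : e ∣ D) : Erays d D ⊆ DeltaE d D e 1 := by
  rintro _ (rfl | ⟨i, rfl⟩) <;> simp [DeltaE, hdvd]

theorem deltaE_sdiff_holes (A : Set (Fin d → ℕ)) (s : ℕ) :
    DeltaE d D e s \ Holes d e A = DeltaE d D e s ∩ AddSubmonoid.closure A := by
  ext y
  simp only [DeltaE, Holes, NatE, Set.mem_sdiff, Set.mem_inter_iff, Set.mem_ofPred_eq]
  tauto

theorem exists_mem_deltaE_add_single_eq {s : ℕ} (hdvd : e ∣ D) {y : Fin d → ℕ}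
    (hy : y ∈ DeltaE d D e (s + 1)) (hlt : d * (D - 1) < ∑ i, y i) :
    ∃ z ∈ DeltaE d D e s, ∃ i, z + Pi.single i D = y := by
  obtain ⟨i, -, hi⟩ := Finset.exists_lt_of_sum_lt (s := Finset.univ) (f := fun _ => D - 1) (g := y)
    (by simpa using hlt)
  have single_le : Pi.single i D ≤ y := by
    intro j
    rcases eq_or_ne j i with rfl | hj
    · simpa using Nat.le_of_pred_lt hi
    · simp [hj]
  obtain ⟨z, rfl⟩ := le_iff_exists_add'.1 single_le
  simp only [DeltaE, Set.mem_ofPred_eq, Pi.add_apply, Finset.sum_add_distrib, Finset.sum_pi_single',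
    Finset.mem_univ, if_true, add_mul, one_mul] at hy
  exact ⟨z, ⟨(Nat.dvd_add_left hdvd).1 hy.1, Nat.le_of_add_le_add_right hy.2⟩, i, rfl⟩

theorem exists_mem_deltaE_succ_notMem_add_erays {s : ℕ} (he : 0 < e) (hdvd : e ∣ D)
    (h : s * D + e ≤ d * (D - 1)) :
    ∃ y ∈ DeltaE d D e (s + 1), y ∉ DeltaE d D e s + Erays d D := by
  obtain ⟨y, hyD, sum_y⟩ := exists_le_sum_eq (f := fun _ : Fin d => D - 1) (by simpa using h)
  have hD : 0 < D := by
    by_contra! hD0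
    obtain rfl : D = 0 := by lia
    simp at h
    lia
  refine ⟨y, ⟨?_, ?_⟩, ?_⟩
  · rw [sum_y]
    exact dvd_add (hdvd.mul_left s) dvd_rfl
  · rw [sum_y, add_mul, one_mul]
    exact Nat.add_le_add_left (Nat.le_of_dvd hD hdvd) _
  · rintro ⟨z, hz, w, (rfl | ⟨i, rfl⟩), rfl⟩
    · have := hz.2
      simp only [add_zero] at sum_y
      lia
    · have := hyD i
      simp only [Pi.add_apply, Pi.single_eq_same] at this
      lia

theorem deltaE_add_erays_eq_iff {s : ℕ} (he : 0 < e) (hdvd : e ∣ D) :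
    DeltaE d D e s + Erays d D = DeltaE d D e (s + 1) ↔ d * (D - 1) ≤ s * D + (e - 1) := by
  constructor
  · intro h
    by_contra! hlt
    obtain ⟨y, hy, hy'⟩ :=
      exists_mem_deltaE_succ_notMem_add_erays (d := d) (s := s) he hdvd (by lia)
    exact hy' (h ▸ hy)
  · intro h
    refine ((Set.add_subset_add_left (erays_subset_deltaE_one hdvd)).trans
      (deltaE_add_deltaE_subset s 1)).antisymm fun y hy => ?_
    rcases le_or_gt (∑ i, y i) (s * D) with hle | hlt
    · exact ⟨y, ⟨hy.1, hle⟩, 0, Set.mem_insert _ _, add_zero y⟩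
    · have degree_ge : s * D + e ≤ ∑ i, y i := by
        have := Nat.le_of_dvd (Nat.sub_pos_of_lt hlt) (Nat.dvd_sub hy.1 (hdvd.mul_left s))
        lia
      obtain ⟨z, hz, i, hzy⟩ := exists_mem_deltaE_add_single_eq hdvd hy (by lia)
      exact ⟨z, hz, _, Set.mem_insert_of_mem _ (Set.mem_range_self i), hzy⟩

end DegreeTruncation

/-- The number `K = (d - 1)(D - 2) + D/e - 2`: beyond degree `K * D` a set of one-singular-point
type has no holes, and `(D/e) * K` is the upper bound for its sumsets regularity. -/
def holeLevel (d D e : ℕ) : ℕ := (d - 1) * (D - 2) + D / e - 2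

theorem mul_sub_one_le_mul_holeLevel {d D e : ℕ} (hd : 2 ≤ d) (hD : 3 ≤ D) (hm : 2 ≤ D / e) :
    d * (D - 1) ≤ D / e * holeLevel d D e * D := by
  have level_ge : (d - 1) * (D - 2) ≤ holeLevel d D e := by
    unfold holeLevel
    lia
  calc d * (D - 1) ≤ 2 * ((d - 1) * (D - 2)) * D := by
        obtain ⟨a, rfl⟩ := Nat.exists_eq_add_of_le' hd
        obtain ⟨b, rfl⟩ := Nat.exists_eq_add_of_le' hD
        simp only [Nat.reduceSubDiff]
        nlinarith [Nat.zero_le (a * b)]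
    _ ≤ D / e * holeLevel d D e * D := by gcongr

namespace OneSingType

variable {d D e : ℕ} {A : Set (Fin d → ℕ)}

theorem nsmul_subset_deltaE (hA : OneSingType d D e A) (s : ℕ) : s • A ⊆ DeltaE d D e s := by
  induction s with
  | zero => simp [DeltaE]
  | succ s ih =>
    have subset_one : A ⊆ DeltaE d D e 1 := fun a ha =>
      ⟨(hA.1 a ha).2, by simpa using (hA.1 a ha).1⟩
    rw [succ_nsmul]
    exact (Set.add_subset_add ih subset_one).trans (deltaE_add_deltaE_subset s 1)

theorem mem_nsmul_of_mem_closure (hA : OneSingType d D e A) (he : 0 < e) {y : Fin d → ℕ}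
    (hy : y ∈ AddSubmonoid.closure A) {s : ℕ} (hs : ∑ i, y i ≤ e * s) : y ∈ s • A := by
  let degree : (Fin d → ℕ) →+ ℕ := ∑ i, Pi.evalAddMonoidHom _ i
  have degree_apply (z : Fin d → ℕ) : degree z = ∑ i, z i := by simp [degree]
  obtain ⟨n, hn, hyn⟩ := exists_mem_nsmul_of_mem_closure degree (e := e) (fun a ha ha0 => by
    rw [degree_apply]
    refine Nat.le_of_dvd (Nat.pos_of_ne_zero fun h => ha0 ?_) (hA.1 a ha).2
    simpa [funext_iff] using h) hy
  rw [degree_apply] at hn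
  exact Set.nsmul_right_monotone hA.2.1 (Nat.le_of_mul_le_mul_left (hn.trans hs) he) hyn

theorem mem_nsmul_of_holeLevel_lt (hA : OneSingType d D e A) (he : 0 < e) (heD : e < D)
    (hdvd : e ∣ D) {s : ℕ} {y : Fin d → ℕ} (hy : y ∈ DeltaE d D e s)
    (hlt : holeLevel d D e * D < ∑ i, y i) : y ∈ s • A := by
  obtain ⟨c, t, hc, ht⟩ := exists_add_mul_eq_mul_of_dvd (he.trans heD) hdvd hy.1
  have level_lt : holeLevel d D e < t := Nat.lt_of_mul_lt_mul_right (a := D) (by lia)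
  have t_le : t ≤ s := by
    have hce : c * e < D := (Nat.mul_lt_mul_of_pos_right hc he).trans_le (Nat.div_mul_le_self D e)
    refine Nat.le_of_lt_succ (Nat.lt_of_mul_lt_mul_right (a := D) ?_)
    rw [Nat.succ_mul, ← ht]
    exact add_lt_add_of_le_of_lt hy.2 hce
  refine Set.nsmul_right_monotone hA.2.1 t_le
    (mem_nsmul_of_sum_add_eq_mul he heD hA.2.2.1 hA.2.2.2 ht ?_)
  unfold holeLevel at level_lt
  rw [Fintype.card_fin]
  lia

theorem holes_subset_deltaE (hA : OneSingType d D e A) (he : 0 < e) (heD : e < D) (hdvd : e ∣ D)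
    {s : ℕ} (hs : holeLevel d D e ≤ s) : Holes d e A ⊆ DeltaE d D e s := by
  rintro y ⟨hye, hy⟩
  refine ⟨hye, ?_⟩
  contrapose! hy
  have y_mem : y ∈ DeltaE d D e (∑ i, y i) := ⟨hye, Nat.le_mul_of_pos_right _ (by lia)⟩
  exact AddSubmonoid.nsmul_subset AddSubmonoid.subset_closure
    (hA.mem_nsmul_of_holeLevel_lt he heD hdvd y_mem ((Nat.mul_le_mul_right D hs).trans_lt hy))

theorem sumset_eq_deltaE_sdiff_holes (hA : OneSingType d D e A) (he : 0 < e) (heD : e < D)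
    (hdvd : e ∣ D) {s : ℕ} (hs : D / e * holeLevel d D e ≤ s) :
    sumset A s = DeltaE d D e s \ Holes d e A := by
  rw [sumset_eq_nsmul, deltaE_sdiff_holes]
  refine (Set.subset_inter (hA.nsmul_subset_deltaE s)
    (AddSubmonoid.nsmul_subset AddSubmonoid.subset_closure)).antisymm ?_
  rintro y ⟨hyΔ, hy⟩
  rcases le_or_gt (∑ i, y i) (holeLevel d D e * D) with hle | hlt
  · refine hA.mem_nsmul_of_mem_closure he hy ?_
    calc ∑ i, y i ≤ holeLevel d D e * D := hle
      _ = e * (D / e * holeLevel d D e) := by rw [← mul_assoc, Nat.mul_div_cancel' hdvd, mul_comm]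
      _ ≤ e * s := Nat.mul_le_mul_left e hs
  · exact hA.mem_nsmul_of_holeLevel_lt he heD hdvd hyΔ hlt

end OneSingType

theorem stmt_13 (d D e : ℕ) (hd : 2 ≤ d) (hD : 3 ≤ D) (he : 1 ≤ e) (heD : e < D)
    (hdvd : e ∣ D)
    (A : Set (Fin d → ℕ)) (hA : OneSingType d D e A) :
    ∃ σ : ℕ,
      IsLeast {s : ℕ | Holes d e A ⊆ DeltaE d D e s ∧
          (∀ s' ≥ s, sumset A s' = DeltaE d D e s' \ Holes d e A) ∧
          DeltaE d D e s + Erays d D = DeltaE d D e (s + 1)} σ ∧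
      d * (D - 1) ≤ σ * D + (e - 1) ∧
      σ ≤ (D / e) * ((d - 1) * (D - 2) + D / e - 2) := by
  have hm : 2 ≤ D / e := by
    obtain ⟨m, rfl⟩ := hdvd
    rw [Nat.mul_div_cancel_left m he]
    exact (Nat.lt_mul_iff_one_lt_right he).1 heD
  set S := {s : ℕ | Holes d e A ⊆ DeltaE d D e s ∧
    (∀ s' ≥ s, sumset A s' = DeltaE d D e s' \ Holes d e A) ∧
    DeltaE d D e s + Erays d D = DeltaE d D e (s + 1)}
  have bound_mem : D / e * holeLevel d D e ∈ S :=
    ⟨hA.holes_subset_deltaE he heD hdvd (Nat.le_mul_of_pos_left _ (by lia)),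
      fun s' hs' => hA.sumset_eq_deltaE_sdiff_holes he heD hdvd hs',
      (deltaE_add_erays_eq_iff he hdvd).2
        ((mul_sub_one_le_mul_holeLevel hd hD hm).trans (Nat.le_add_right _ _))⟩
  have sInf_mem : sInf S ∈ S := Nat.sInf_mem ⟨_, bound_mem⟩
  exact ⟨sInf S, ⟨sInf_mem, fun _ => Nat.sInf_le⟩,
    (deltaE_add_erays_eq_iff he hdvd).1 sInf_mem.2.2, Nat.sInf_le bound_mem⟩
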